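/- For every s ∈ (0,1) and λ > 0, one has the Neumann boundary limit lim_{y→0⁺} y^{1−2s} u_{λ,s}'(y) = −2^{1−2s} (Γ(1−s)/Γ(s)) λ^s. Equivalently, λ^s = −(2^{2s−1}Γ(s)/Γ(1−s)) lim_{y→0⁺} y^{1−2s} u_{λ,s}'(y). (This is the scalar form of the weighted Dirichlet-to-Neumann relation of Lemma 3.2.) -/

import Mathlib

open MeasureTheory Set Filter

/-- The scalar `s`-harmonic extension `u_{λ,s}(y)`. -/
noncomputable def uExt (s lam y : ℝ) : ℝ :=
  (lam ^ s / Real.Gamma s) *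
    ∫ t in Set.Ioi (0:ℝ),
      Real.exp (-(t * lam)) * Real.exp (-(y ^ 2 / (4 * t))) * t ^ (s - 1)

/-! Up to its normalization, `u_{λ,s}(y)` is the Macdonald integral
`J s λ b = ∫₀^∞ e^{-λt} e^{-b/t} t^{s-1} dt` at `b = y²/4`. Differentiating in `b` lowers the order
by one, and the substitution `t = b/x` gives `J (s-1) λ b = b^{s-1} J (1-s) 1 (λb)`. The powers of
`y` in the weighted derivative therefore cancel exactly, and what remains is a multiple of
`J (1-s) 1 (λy²/4)`, which tends to `J (1-s) 1 0 = Γ(1-s)`. -/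

section MacdonaldIntegral

open Real

variable {ν a b c t : ℝ}

/-- The integrand of the Macdonald integral of order `ν`, as a function of `t > 0`. -/
noncomputable def macdonaldKernel (ν a b t : ℝ) : ℝ :=
  exp (-(t * a)) * exp (-(b / t)) * t ^ (ν - 1)

/-- The Macdonald integral of order `ν`. For `a, b > 0` it equals `2 (b/a)^{ν/2} K_ν(2√(ab))`,
where `K_ν` is the modified Bessel function of the second kind; allowing `b = 0` makes the
Gamma integral its boundary value. -/
noncomputable def macdonaldIntegral (ν a b : ℝ) : ℝ :=
  ∫ t in Ioi 0, macdonaldKernel ν a b t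

lemma measurable_macdonaldKernel : Measurable (macdonaldKernel ν a b) := by
  unfold macdonaldKernel
  fun_prop

lemma macdonaldKernel_nonneg (ht : 0 ≤ t) : 0 ≤ macdonaldKernel ν a b t := by
  unfold macdonaldKernel
  positivity

lemma antitone_macdonaldKernel (ht : 0 ≤ t) : Antitone fun b ↦ macdonaldKernel ν a b t := by
  intro b c hbc
  simp only [macdonaldKernel]
  gcongr

lemma norm_macdonaldKernel_le (ht : 0 ≤ t) (hcb : c ≤ b) :
    ‖macdonaldKernel ν a b t‖ ≤ macdonaldKernel ν a c t := by
  rw [norm_of_nonneg (macdonaldKernel_nonneg ht)]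
  exact antitone_macdonaldKernel ht hcb

lemma macdonaldKernel_zero_right :
    macdonaldKernel ν a 0 t = t ^ (ν - 1) * exp (-(a * t)) := by
  simp [macdonaldKernel, mul_comm]

lemma macdonaldIntegral_zero_right (hν : 0 < ν) (ha : 0 < a) :
    macdonaldIntegral ν a 0 = (1 / a) ^ ν * Gamma ν := by
  simp only [macdonaldIntegral, macdonaldKernel_zero_right]
  exact integral_rpow_mul_exp_neg_mul_Ioi hν ha

lemma integrableOn_macdonaldKernel_zero_right (hν : 0 < ν) (ha : 0 < a) :
    IntegrableOn (macdonaldKernel ν a 0) (Ioi 0) := by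
  refine (integrableOn_rpow_mul_exp_neg_mul_rpow (p := 1) (s := ν - 1) (by linarith) one_pos
    ha).congr_fun (fun t _ ↦ ?_) measurableSet_Ioi
  simp only [macdonaldKernel_zero_right, rpow_one, neg_mul]

lemma exp_neg_div_le_factorial_mul_pow (hb : 0 < b) (ht : 0 < t) (n : ℕ) :
    exp (-(b / t)) ≤ n.factorial / b ^ n * t ^ n := by
  have hexp : (b / t) ^ n / n.factorial ≤ exp (b / t) :=
    pow_div_factorial_le_exp _ (by positivity) n
  calc exp (-(b / t)) = (exp (b / t))⁻¹ := exp_neg _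
    _ ≤ ((b / t) ^ n / n.factorial)⁻¹ := inv_anti₀ (by positivity) hexp
    _ = n.factorial / b ^ n * t ^ n := by rw [div_pow]; field_simp

-- The factor `e^{-b/t}` vanishes to infinite order at `t = 0`, so raising the order is free.
lemma macdonaldKernel_le_zero_right (hb : 0 < b) (ht : 0 < t) (n : ℕ) :
    macdonaldKernel ν a b t ≤ n.factorial / b ^ n * macdonaldKernel (ν + n) a 0 t := by
  have hpow : t ^ (ν + n - 1) = t ^ n * t ^ (ν - 1) := by
    rw [← rpow_natCast, ← rpow_add ht]
    ring_nf
  calc macdonaldKernel ν a b t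
      ≤ exp (-(t * a)) * (n.factorial / b ^ n * t ^ n) * t ^ (ν - 1) := by
        unfold macdonaldKernel
        gcongr
        exact exp_neg_div_le_factorial_mul_pow hb ht n
    _ = n.factorial / b ^ n * macdonaldKernel (ν + n) a 0 t := by
        rw [macdonaldKernel_zero_right, hpow, mul_comm a]
        ring

lemma integrableOn_macdonaldKernel (ha : 0 < a) (hb : 0 < b) :
    IntegrableOn (macdonaldKernel ν a b) (Ioi 0) := by
  obtain ⟨n, hn⟩ := exists_nat_gt (-ν)
  have hdom : IntegrableOn (macdonaldKernel (ν + n) a 0) (Ioi 0) :=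
    integrableOn_macdonaldKernel_zero_right (by linarith) ha
  refine (hdom.const_mul (n.factorial / b ^ n)).mono'
    measurable_macdonaldKernel.aestronglyMeasurable ?_
  filter_upwards [ae_restrict_mem measurableSet_Ioi] with t (ht : 0 < t)
  rw [norm_of_nonneg (macdonaldKernel_nonneg ht.le)]
  exact macdonaldKernel_le_zero_right hb ht n

lemma hasDerivAt_macdonaldKernel (ht : 0 < t) :
    HasDerivAt (fun b ↦ macdonaldKernel ν a b t) (-macdonaldKernel (ν - 1) a b t) b := by
  have hexp : HasDerivAt (fun b ↦ exp (-(b / t))) (exp (-(b / t)) * -(1 / t)) b :=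
    ((hasDerivAt_id b).div_const t).fun_neg.exp
  refine ((hexp.const_mul (exp (-(t * a)))).mul_const (t ^ (ν - 1))).congr_deriv ?_
  rw [macdonaldKernel, rpow_sub_one ht.ne' (ν - 1)]
  ring

theorem hasDerivAt_macdonaldIntegral (ha : 0 < a) (hb : 0 < b) :
    HasDerivAt (macdonaldIntegral ν a) (-macdonaldIntegral (ν - 1) a b) b := by
  rw [macdonaldIntegral, ← integral_neg]
  refine (hasDerivAt_integral_of_dominated_loc_of_deriv_le (Ioi_mem_nhds (half_lt_self hb))
    (F := fun b t ↦ macdonaldKernel ν a b t) (F' := fun b t ↦ -macdonaldKernel (ν - 1) a b t)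
    (bound := macdonaldKernel (ν - 1) a (b / 2))
    (.of_forall fun _ ↦ measurable_macdonaldKernel.aestronglyMeasurable)
    (integrableOn_macdonaldKernel ha hb)
    measurable_macdonaldKernel.neg.aestronglyMeasurable ?_
    (integrableOn_macdonaldKernel ha (half_pos hb)) ?_).2
  · filter_upwards [ae_restrict_mem measurableSet_Ioi] with t (ht : 0 < t) c hc
    rw [norm_neg]
    exact norm_macdonaldKernel_le ht.le (le_of_lt hc)
  · filter_upwards [ae_restrict_mem measurableSet_Ioi] with t ht c _
    exact hasDerivAt_macdonaldKernel ht

theorem continuousWithinAt_macdonaldIntegral_zero (hν : 0 < ν) (ha : 0 < a) :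
    ContinuousWithinAt (macdonaldIntegral ν a) (Ici 0) 0 := by
  refine continuousWithinAt_of_dominated (bound := macdonaldKernel ν a 0)
    (.of_forall fun _ ↦ measurable_macdonaldKernel.aestronglyMeasurable) ?_
    (integrableOn_macdonaldKernel_zero_right hν ha) ?_
  · filter_upwards [self_mem_nhdsWithin] with b hb
    filter_upwards [ae_restrict_mem measurableSet_Ioi] with t (ht : 0 < t)
    exact norm_macdonaldKernel_le ht.le hb
  · filter_upwards [ae_restrict_mem measurableSet_Ioi] with t ht
    exact (hasDerivAt_macdonaldKernel ht).continuousAt.continuousWithinAt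

theorem macdonaldIntegral_neg (ν a b : ℝ) :
    macdonaldIntegral (-ν) a b = macdonaldIntegral ν b a := by
  rw [macdonaldIntegral, ← integral_comp_rpow_Ioi _ (show (-1 : ℝ) ≠ 0 by norm_num)]
  refine setIntegral_congr_fun measurableSet_Ioi fun t (ht : 0 < t) ↦ ?_
  have hpow : t ^ (-1 - 1 : ℝ) * (t⁻¹) ^ (-ν - 1) = t ^ (ν - 1) := by
    rw [inv_rpow ht.le, ← rpow_neg ht.le, ← rpow_add ht]
    ring_nf
  simp only [macdonaldKernel, rpow_neg_one, abs_neg, abs_one, one_mul, smul_eq_mul, ← hpow,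
    div_inv_eq_mul]
  ring_nf

theorem macdonaldIntegral_rescale (hc : 0 < c) :
    macdonaldIntegral ν a b = c ^ ν * macdonaldIntegral ν (c * a) (b / c) := by
  have hscale := integral_comp_mul_left_Ioi' (macdonaldKernel ν a b) 0 hc
  rw [mul_zero] at hscale
  rw [macdonaldIntegral, ← hscale, smul_eq_mul, macdonaldIntegral, ← integral_const_mul,
    ← integral_const_mul]
  refine setIntegral_congr_fun measurableSet_Ioi fun t (ht : 0 < t) ↦ ?_
  simp only [macdonaldKernel]
  rw [mul_rpow hc.le ht.le, rpow_sub_one hc.ne', div_div, mul_left_comm t c a, mul_assoc c t a]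
  field_simp

theorem macdonaldIntegral_eq_rpow_mul_neg (hb : 0 < b) :
    macdonaldIntegral ν a b = b ^ ν * macdonaldIntegral (-ν) 1 (b * a) := by
  rw [macdonaldIntegral_neg, macdonaldIntegral_rescale hb, div_self hb.ne']

end MacdonaldIntegral

section Extension

open Real Topology

variable {s lam y : ℝ}

lemma uExt_eq_macdonaldIntegral (s lam y : ℝ) :
    uExt s lam y = lam ^ s / Gamma s * macdonaldIntegral s lam (y ^ 2 / 4) := by
  simp only [uExt, macdonaldIntegral, macdonaldKernel, div_div]

lemma hasDerivAt_uExt (hlam : 0 < lam) (hy : y ≠ 0) :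
    HasDerivAt (uExt s lam)
      (-(lam ^ s / Gamma s * (y / 2 * macdonaldIntegral (s - 1) lam (y ^ 2 / 4)))) y := by
  have hsq : HasDerivAt (fun y : ℝ ↦ y ^ 2 / 4) (y / 2) y :=
    ((hasDerivAt_pow 2 y).div_const 4).congr_deriv (by ring)
  have hJ := (hasDerivAt_macdonaldIntegral (ν := s) hlam (by positivity)).comp y hsq
  rw [funext (uExt_eq_macdonaldIntegral s lam)]
  exact (hJ.const_mul (lam ^ s / Gamma s)).congr_deriv (by ring)

lemma rpow_mul_sq_div_four_rpow (hy : 0 < y) :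
    y ^ (1 - 2 * s) * (y / 2 * (y ^ 2 / 4) ^ (s - 1)) = 2 ^ (1 - 2 * s) := by
  have hsq : (y ^ 2 / 4) ^ (s - 1) = (y / 2) ^ (2 * (s - 1)) := by
    rw [show y ^ 2 / 4 = (y / 2) ^ (2 : ℝ) by rw [rpow_two]; ring, ← rpow_mul (by positivity)]
  have hhalf : y / 2 * (y ^ 2 / 4) ^ (s - 1) = (y / 2) ^ (-(1 - 2 * s)) := by
    rw [hsq, mul_comm, ← rpow_add_one (by positivity)]
    ring_nf
  rw [hhalf, rpow_neg (by positivity), div_rpow hy.le zero_le_two, inv_div,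
    mul_div_cancel₀ _ (rpow_pos_of_pos hy _).ne']

lemma rpow_mul_deriv_uExt (hlam : 0 < lam) (hy : 0 < y) :
    y ^ (1 - 2 * s) * deriv (uExt s lam) y =
      -(2 ^ (1 - 2 * s) * (lam ^ s / Gamma s) *
        macdonaldIntegral (1 - s) 1 (y ^ 2 / 4 * lam)) := by
  rw [(hasDerivAt_uExt hlam hy.ne').deriv, macdonaldIntegral_eq_rpow_mul_neg (by positivity),
    neg_sub, ← rpow_mul_sq_div_four_rpow hy]
  ring

lemma tendsto_macdonaldIntegral_sq_div_four_mul (hs : s < 1) (hlam : 0 ≤ lam) :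
    Tendsto (fun y ↦ macdonaldIntegral (1 - s) 1 (y ^ 2 / 4 * lam)) (𝓝 0) (𝓝 (Gamma (1 - s))) := by
  have hs' : 0 < 1 - s := sub_pos.mpr hs
  have hJ := (continuousWithinAt_macdonaldIntegral_zero hs' one_pos).tendsto
  rw [macdonaldIntegral_zero_right hs' one_pos, div_one, one_rpow, one_mul] at hJ
  refine hJ.comp (tendsto_nhdsWithin_iff.mpr ⟨?_, .of_forall fun y ↦ ?_⟩)
  · have hcont : Continuous fun y : ℝ ↦ y ^ 2 / 4 * lam := by fun_prop
    simpa using hcont.tendsto 0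
  · exact mem_Ici.mpr (by positivity)

end Extension

theorem uExt_dirichlet_to_neumann_general (s : ℝ) (hs : s < 1) (_hs_pole : ∀ n : ℕ, s ≠ -n)
    (lam : ℝ) (hlam : 0 < lam) :
    Tendsto (fun y : ℝ => y ^ (1 - 2 * s) * deriv (uExt s lam) y)
      (nhdsWithin 0 (Set.Ioi 0))
      (nhds (-(2:ℝ) ^ (1 - 2 * s) * (Real.Gamma (1 - s) / Real.Gamma s) * lam ^ s)) := by
  have hlim := ((tendsto_macdonaldIntegral_sq_div_four_mul hs hlam.le).const_mul
    (2 ^ (1 - 2 * s) * (lam ^ s / Real.Gamma s))).neg.mono_left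
      (nhdsWithin_le_nhds (s := Set.Ioi 0))
  convert hlim.congr' ?_ using 2
  · ring
  · filter_upwards [self_mem_nhdsWithin] with y hy
    exact (rpow_mul_deriv_uExt hlam hy).symm

theorem uExt_dirichlet_to_neumann (s : ℝ) (hs : s ∈ Set.Ioo (0:ℝ) 1)
    (lam : ℝ) (hlam : 0 < lam) :
    Tendsto (fun y : ℝ => y ^ (1 - 2 * s) * deriv (uExt s lam) y)
      (nhdsWithin 0 (Set.Ioi 0))
      (nhds (-(2:ℝ) ^ (1 - 2 * s) * (Real.Gamma (1 - s) / Real.Gamma s) * lam ^ s)) :=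
  uExt_dirichlet_to_neumann_general s hs.2
    (fun n ↦ ((neg_nonpos.mpr n.cast_nonneg).trans_lt hs.1).ne') lam hlam
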